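/- Let L > 3 be an odd integer divisible by 3 such that every prime factor of L other than 3 is congruent to 5 modulo 8. (i) If 9 does not divide L, then M(L,3) = M^e(L,3) = (L + 1)/4. (ii) If 9 divides L but 27 does not divide L, then M(L,3) = M^e(L,3) = (L − 1)/4. -/

import Mathlib

open Finset

/-- The set of differences of a codeword `I ⊆ ℤ_L`. -/
def dset {L : ℕ} (I : Finset (ZMod L)) : Finset (ZMod L) :=
  (I ×ˢ I).image fun p => p.1 - p.2

/-- The set of nonzero differences. -/
def dstar {L : ℕ} (I : Finset (ZMod L)) : Finset (ZMod L) := dset I \ {0}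

/-- A conflict-avoiding code of length `L` and weight `ω`. -/
def IsCAC (L ω : ℕ) (C : Finset (Finset (ZMod L))) : Prop :=
  (∀ I ∈ C, I.card = ω) ∧
  ∀ I ∈ C, ∀ J ∈ C, I ≠ J → Disjoint (dstar I) (dstar J)

/-- `M(L,ω)`: the maximum size of a CAC of length `L` and weight `ω`. -/
noncomputable def MCAC (L ω : ℕ) : ℕ :=
  sSup {n | ∃ C : Finset (Finset (ZMod L)), IsCAC L ω C ∧ C.card = n}

/-- An equi-difference codeword of weight three: `I = {0, g, 2g}` for some generator
`1 ≤ g ≤ L/2`. -/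
def IsEquiDiff {L : ℕ} (I : Finset (ZMod L)) : Prop :=
  ∃ g : ℕ, 1 ≤ g ∧ 2 * g ≤ L ∧ I = {0, (g : ZMod L), ((2 * g : ℕ) : ZMod L)}

/-- `M^e(L,ω)`: the maximum size of a CAC of length `L` and weight `ω` all of whose
codewords are equi-difference. -/
noncomputable def MeCAC (L ω : ℕ) : ℕ :=
  sSup {n | ∃ C : Finset (Finset (ZMod L)),
    IsCAC L ω C ∧ (∀ I ∈ C, IsEquiDiff I) ∧ C.card = n}

/-- The leave of a CAC `C` of length `L`: `Λ = ℤ_L \ ⋃_{I ∈ C} d(I)`. -/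
def leave {L : ℕ} (C : Finset (Finset (ZMod L))) : Set (ZMod L) :=
  Set.univ \ ⋃ I ∈ C, (dset I : Set (ZMod L))

/-!
*Upper bound.* For odd `L` a codeword of weight three has at least four nonzero differences, unless
it is a coset of the subgroup of order three. Counting the differences killed by `3` twice makes the
bound `4` uniform, and as there are at most two nonzero such elements, `4 * #C ≤ (L - 1) + 2`.

*Construction.* Let `A ⊆ ℤ_L \ {0}` be symmetric and such that `x, 2x ∈ A` forces `3x = 0`. Then
choosing one `x` from each pair `{x, -x} ⊆ A` gives an equi-difference code of size `#A / 2`. If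
`p ≡ 5 (mod 8)`, then `-1` is a square and `2` is a nonsquare modulo `p`, so that such an `A` can be
transported from `ℤ_L` to `ℤ_{pL}`: take `p A` together with all elements whose residue mod `p` is a
nonzero square. Doing this for one prime after another, starting from `{±1} ⊆ ℤ_3` or
`{±1, ±3} ⊆ ℤ_9`, reaches the upper bound.
-/

section Differences

variable {L : ℕ}

theorem mem_dstar {I : Finset (ZMod L)} {d : ZMod L} :
    d ∈ dstar I ↔ d ≠ 0 ∧ ∃ a ∈ I, ∃ b ∈ I, a - b = d := by
  simp only [dstar, dset, mem_sdiff, mem_image, mem_product, mem_singleton, Prod.exists]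
  grind

theorem sub_mem_dstar {I : Finset (ZMod L)} {a b : ZMod L} (ha : a ∈ I) (hb : b ∈ I)
    (hab : a ≠ b) : a - b ∈ dstar I :=
  mem_dstar.mpr ⟨sub_ne_zero.mpr hab, a, ha, b, hb, rfl⟩

theorem neg_mem_dstar {I : Finset (ZMod L)} {d : ZMod L} (hd : d ∈ dstar I) : -d ∈ dstar I := by
  obtain ⟨hd0, a, ha, b, hb, rfl⟩ := mem_dstar.mp hd
  exact mem_dstar.mpr ⟨neg_ne_zero.mpr hd0, b, hb, a, ha, (neg_sub a b).symm⟩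

end Differences

section UpperBound

variable {L : ℕ}

theorem isUnit_two_of_odd (hL : Odd L) : IsUnit (2 : ZMod L) := by
  exact_mod_cast (ZMod.isUnit_iff_coprime 2 L).mpr (Nat.coprime_two_left.mpr hL)

theorem two_le_card_of_mem_of_neg_mem (hL : Odd L) {S : Finset (ZMod L)} {a : ZMod L}
    (ha : a ∈ S) (hna : -a ∈ S) (ha0 : a ≠ 0) : 2 ≤ #S := by
  rw [← card_pair (ZMod.ne_neg_self hL ha0)]
  exact card_le_card (by simp [insert_subset_iff, ha, hna])

theorem four_le_card_dstar (hL : Odd L) {I : Finset (ZMod L)} {a b : ZMod L}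
    (ha : a ∈ dstar I) (hb : b ∈ dstar I) (hab : a ≠ b) (hanb : a ≠ -b) : 4 ≤ #(dstar I) := by
  have hpair : ∀ c ∈ dstar I, #({c, -c} : Finset (ZMod L)) = 2 := fun c hc =>
    card_pair (ZMod.ne_neg_self hL (mem_dstar.mp hc).1)
  have hdisj : Disjoint ({a, -a} : Finset (ZMod L)) {b, -b} := by
    simp only [disjoint_insert_left, disjoint_singleton_left, mem_insert, mem_singleton, not_or]
    grind
  calc 4 = #({a, -a} ∪ {b, -b} : Finset (ZMod L)) := by
        rw [card_union_of_disjoint hdisj, hpair a ha, hpair b hb]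
    _ ≤ #(dstar I) := card_le_card (by
        simp [insert_subset_iff, ha, hb, neg_mem_dstar])

theorem four_le_card_dstar_add_card_three_torsion (hL : Odd L) {I : Finset (ZMod L)}
    (hI : #I = 3) : 4 ≤ #(dstar I) + #{d ∈ dstar I | 3 * d = 0} := by
  obtain ⟨x, y, z, hxy, hxz, hyz, rfl⟩ := card_eq_three.mp hI
  have hxy_mem : x - y ∈ dstar {x, y, z} := sub_mem_dstar (by simp) (by simp) hxy
  have hyz_mem : y - z ∈ dstar {x, y, z} := sub_mem_dstar (by simp) (by simp) hyz
  have hxz_mem : x - z ∈ dstar {x, y, z} := sub_mem_dstar (by simp) (by simp) hxz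
  by_cases heq : x - y = y - z
  · by_cases h3 : 3 * (x - y) = 0
    · have htorsion : x - y ∈ ({d ∈ dstar {x, y, z} | 3 * d = 0} : Finset (ZMod L)) :=
        mem_filter.mpr ⟨hxy_mem, h3⟩
      have htorsion_neg : -(x - y) ∈ ({d ∈ dstar {x, y, z} | 3 * d = 0} : Finset (ZMod L)) :=
        mem_filter.mpr ⟨neg_mem_dstar hxy_mem, by rw [mul_neg, h3, neg_zero]⟩
      have := two_le_card_of_mem_of_neg_mem hL htorsion htorsion_neg (sub_ne_zero.mpr hxy)
      have := card_filter_le (dstar {x, y, z}) (fun d => 3 * d = 0)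
      lia
    · refine (four_le_card_dstar hL hxy_mem hxz_mem ?_ ?_).trans (Nat.le_add_right _ _)
      · exact fun h => hyz (by linear_combination -h)
      · exact fun h => h3 (by linear_combination h + heq)
  · refine (four_le_card_dstar hL hxy_mem hyz_mem heq ?_).trans (Nat.le_add_right _ _)
    exact fun h => hxz (by linear_combination h)

theorem card_three_torsion_le [NeZero L] : #{d : ZMod L | 3 * d = 0} ≤ 3 := by
  simpa using IsAddCyclic.card_nsmul_eq_zero_le (α := ZMod L) (n := 3) (by norm_num)

theorem IsCAC.sum_card_dstar_inter_le {ω : ℕ} {C : Finset (Finset (ZMod L))} (hC : IsCAC L ω C)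
    (T : Finset (ZMod L)) : ∑ I ∈ C, #(dstar I ∩ T) ≤ #(T.erase 0) := by
  have hdisj : (C : Set (Finset (ZMod L))).PairwiseDisjoint (fun I => dstar I ∩ T) :=
    fun I hI J hJ hIJ => (hC.2 I hI J hJ hIJ).mono inter_subset_left inter_subset_left
  rw [← card_biUnion hdisj]
  refine card_le_card (biUnion_subset.mpr fun I _ d hd => ?_)
  obtain ⟨hdI, hdT⟩ := mem_inter.mp hd
  exact mem_erase.mpr ⟨(mem_dstar.mp hdI).1, hdT⟩

theorem IsCAC.four_mul_card_le (hL : Odd L) {C : Finset (Finset (ZMod L))} (hC : IsCAC L 3 C) :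
    4 * #C ≤ L + 1 := by
  have : NeZero L := ⟨hL.pos.ne'⟩
  have hdiff : ∑ I ∈ C, #(dstar I) ≤ L - 1 := by
    simpa [ZMod.card] using hC.sum_card_dstar_inter_le univ
  have htorsion : ∑ I ∈ C, #{d ∈ dstar I | 3 * d = 0} ≤ 2 := by
    have := hC.sum_card_dstar_inter_le {d | 3 * d = 0}
    simp only [inter_filter, inter_univ] at this
    rw [card_erase_of_mem (by simp)] at this
    have := card_three_torsion_le (L := L)
    lia
  have hsum : #C * 4 ≤ ∑ I ∈ C, (#(dstar I) + #{d ∈ dstar I | 3 * d = 0}) :=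
    card_nsmul_le_sum _ _ _ fun I hI => four_le_card_dstar_add_card_three_torsion hL (hC.1 I hI)
  rw [sum_add_distrib] at hsum
  have := hL.pos
  lia

end UpperBound

/-- A symmetric set of generators: taking one element `x` of each pair `{x, -x} ⊆ A`, the codewords
`{0, x, 2x}` form a conflict-avoiding code of odd length. Elements with `3x = 0` are exempt from
the condition `2x ∉ A` because then `2x = -x`. -/
structure IsGeneratorSet {L : ℕ} (A : Finset (ZMod L)) : Prop where
  zero_notMem : 0 ∉ A
  neg_mem : ∀ x ∈ A, -x ∈ A
  three_mul_eq_zero : ∀ x ∈ A, 2 * x ∈ A → 3 * x = 0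

section Codes

variable {L : ℕ}

/-- The equi-difference codeword generated by a residue `x`, which unlike in `IsEquiDiff` is not
required to have a representative in `[1, L/2]`. -/
def equiDiff (x : ZMod L) : Finset (ZMod L) := {0, x, 2 * x}

/-- The elements of `A` whose representative lies in `[0, L/2)`; for odd `L` this selects one
element of each pair `{x, -x}` of nonzero elements. -/
def lowerHalf (A : Finset (ZMod L)) : Finset (ZMod L) := {x ∈ A | 2 * x.val < L}

theorem card_equiDiff (hL : Odd L) {x : ZMod L} (hx : x ≠ 0) : #(equiDiff x) = 3 := by
  have h2x : 2 * x ≠ 0 := by rwa [Ne, (isUnit_two_of_odd hL).mul_right_eq_zero]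
  refine card_eq_three.mpr ⟨0, x, 2 * x, hx.symm, h2x.symm, ?_, rfl⟩
  exact fun h => hx (by linear_combination -h)

theorem self_mem_dstar_equiDiff {x : ZMod L} (hx : x ≠ 0) : x ∈ dstar (equiDiff x) :=
  mem_dstar.mpr ⟨hx, x, by simp [equiDiff], 0, by simp [equiDiff], sub_zero x⟩

theorem exists_eq_or_eq_two_mul_of_mem_dstar_equiDiff {x d : ZMod L}
    (hd : d ∈ dstar (equiDiff x)) : ∃ a, (a = x ∨ a = -x) ∧ (d = a ∨ d = 2 * a) := by
  have hd' : d = x ∨ d = -x ∨ d = 2 * x ∨ d = 2 * -x := by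
    obtain ⟨hd0, a, ha, b, hb, rfl⟩ := mem_dstar.mp hd
    simp only [equiDiff, mem_insert, mem_singleton] at ha hb
    grind
  rcases hd' with h | h | h | h
  exacts [⟨x, .inl rfl, .inl h⟩, ⟨-x, .inr rfl, .inl h⟩, ⟨x, .inl rfl, .inr h⟩,
    ⟨-x, .inr rfl, .inr h⟩]

theorem IsGeneratorSet.eq_or_eq_neg_of_mem_dstar (hL : Odd L) {A : Finset (ZMod L)}
    (hA : IsGeneratorSet A) {x y d : ZMod L} (hx : x ∈ A) (hy : y ∈ A)
    (hdx : d ∈ dstar (equiDiff x)) (hdy : d ∈ dstar (equiDiff y)) : x = y ∨ x = -y := by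
  obtain ⟨a, hax, hda⟩ := exists_eq_or_eq_two_mul_of_mem_dstar_equiDiff hdx
  obtain ⟨b, hby, hdb⟩ := exists_eq_or_eq_two_mul_of_mem_dstar_equiDiff hdy
  have ha : a ∈ A := by rcases hax with rfl | rfl; exacts [hx, hA.neg_mem x hx]
  have hb : b ∈ A := by rcases hby with rfl | rfl; exacts [hy, hA.neg_mem y hy]
  have hab : a = b ∨ a = -b := by
    rcases hda with rfl | rfl <;> rcases hdb with h | h
    · exact .inl h
    · exact .inr (by linear_combination h + hA.three_mul_eq_zero b hb (h ▸ ha))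
    · exact .inr (by linear_combination hA.three_mul_eq_zero a ha (h ▸ hb) - h)
    · exact .inl ((isUnit_two_of_odd hL).mul_left_cancel h)
  grind

theorem eq_of_mem_lowerHalf_of_eq_or_eq_neg [NeZero L] {A : Finset (ZMod L)} {x y : ZMod L}
    (hx : x ∈ lowerHalf A) (hy : y ∈ lowerHalf A) (hxy : x = y ∨ x = -y) : x = y := by
  obtain rfl | rfl := hxy
  · rfl
  · have hlt_neg := (mem_filter.mp hx).2
    have hlt := (mem_filter.mp hy).2
    rw [ZMod.neg_val] at hlt_neg
    split_ifs at hlt_neg with hy0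
    · rw [hy0, neg_zero]
    · lia

theorem two_mul_card_lowerHalf (hL : Odd L) {A : Finset (ZMod L)} (h0 : 0 ∉ A)
    (hneg : ∀ x ∈ A, -x ∈ A) : 2 * #(lowerHalf A) = #A := by
  have : NeZero L := ⟨hL.pos.ne'⟩
  have hneg_lt : ∀ x ∈ A, (2 * (-x).val < L ↔ ¬ 2 * x.val < L) := fun x hx => by
    obtain ⟨k, hk⟩ := hL
    have := x.val_lt
    rw [ZMod.neg_val, if_neg (ne_of_mem_of_not_mem hx h0)]
    lia
  have hcard : #(lowerHalf A) = #{x ∈ A | ¬ 2 * x.val < L} := by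
    refine card_bijective (fun x : ZMod L => -x) neg_involutive.bijective fun x => ?_
    simp only [lowerHalf, mem_filter]
    constructor
    · exact fun ⟨hx, hlt⟩ => ⟨hneg x hx, by rwa [hneg_lt x hx, not_not]⟩
    · intro ⟨hx, hlt⟩
      have hx' : x ∈ A := by simpa using hneg _ hx
      exact ⟨hx', by rwa [hneg_lt x hx', not_not] at hlt⟩
  rw [two_mul]
  nth_rewrite 2 [hcard]
  exact card_filter_add_card_filter_not _

theorem isEquiDiff_equiDiff [NeZero L] {x : ZMod L} (hx : x ≠ 0) (hlt : 2 * x.val < L) :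
    IsEquiDiff (equiDiff x) := by
  refine ⟨x.val, ?_, hlt.le, by simp [equiDiff]⟩
  exact Nat.one_le_iff_ne_zero.mpr ((ZMod.val_ne_zero x).mpr hx)

theorem IsGeneratorSet.exists_isCAC (hL : Odd L) {A : Finset (ZMod L)} (hA : IsGeneratorSet A) :
    ∃ C : Finset (Finset (ZMod L)), IsCAC L 3 C ∧ (∀ I ∈ C, IsEquiDiff I) ∧ 2 * #C = #A := by
  have : NeZero L := ⟨hL.pos.ne'⟩
  have hmem : ∀ x ∈ lowerHalf A, x ∈ A := fun x hx => (mem_filter.mp hx).1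
  have hne : ∀ x ∈ lowerHalf A, x ≠ 0 := fun x hx =>
    ne_of_mem_of_not_mem (hmem x hx) hA.zero_notMem
  have heq : ∀ x ∈ lowerHalf A, ∀ y ∈ lowerHalf A, ∀ d ∈ dstar (equiDiff x),
      d ∈ dstar (equiDiff y) → x = y := fun x hx y hy d hdx hdy =>
    eq_of_mem_lowerHalf_of_eq_or_eq_neg hx hy
      (hA.eq_or_eq_neg_of_mem_dstar hL (hmem x hx) (hmem y hy) hdx hdy)
  have hinj : Set.InjOn equiDiff (lowerHalf A : Set (ZMod L)) := fun x hx y hy hxy =>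
    have hself := self_mem_dstar_equiDiff (hne x hx)
    heq x hx y hy x hself (hxy ▸ hself)
  refine ⟨(lowerHalf A).image equiDiff, ⟨?_, ?_⟩, ?_, ?_⟩
  · exact forall_mem_image.mpr fun x hx => card_equiDiff hL (hne x hx)
  · refine forall_mem_image.mpr fun x hx => forall_mem_image.mpr fun y hy hxy => ?_
    exact disjoint_left.mpr fun d hdx hdy => hxy (congrArg equiDiff (heq x hx y hy d hdx hdy))
  · exact forall_mem_image.mpr fun x hx => isEquiDiff_equiDiff (hne x hx) (mem_filter.mp hx).2
  · rw [card_image_of_injOn hinj, two_mul_card_lowerHalf hL hA.zero_notMem hA.neg_mem]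

theorem IsGeneratorSet.MCAC_eq_and_MeCAC_eq (hL : Odd L) {A : Finset (ZMod L)}
    (hA : IsGeneratorSet A) (hcard : L ≤ 2 * #A + 1) :
    MCAC L 3 = #A / 2 ∧ MeCAC L 3 = #A / 2 := by
  obtain ⟨C, hC, hCe, hCA⟩ := hA.exists_isCAC hL
  have hle : ∀ D : Finset (Finset (ZMod L)), IsCAC L 3 D → #D ≤ #A / 2 := fun D hD => by
    have := hD.four_mul_card_le hL
    lia
  constructor
  · refine IsGreatest.csSup_eq ⟨⟨C, hC, by lia⟩, ?_⟩
    rintro _ ⟨D, hD, rfl⟩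
    exact hle D hD
  · refine IsGreatest.csSup_eq ⟨⟨C, hC, hCe, by lia⟩, ?_⟩
    rintro _ ⟨D, hD, -, rfl⟩
    exact hle D hD

end Codes

/-- One class of a two-colouring of the nonzero residues modulo `d` in which `x` and `-x` have the
same colour and `x` and `2x` have different colours. -/
structure IsDoublingColorClass {d : ℕ} (B : Finset (ZMod d)) : Prop where
  zero_notMem : 0 ∉ B
  neg_mem : ∀ x ∈ B, -x ∈ B
  two_mul_mem_iff : ∀ x ≠ 0, 2 * x ∈ B ↔ x ∉ B

theorem isDoublingColorClass_quadraticChar {p : ℕ} [Fact p.Prime] (hp : p % 8 = 5) :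
    IsDoublingColorClass ({x | quadraticChar (ZMod p) x = 1} : Finset (ZMod p)) := by
  have htwo : quadraticChar (ZMod p) 2 = -1 := by
    rw [quadraticChar_neg_one_iff_not_isSquare, ZMod.exists_sq_eq_two_iff (by lia)]
    lia
  have hneg : quadraticChar (ZMod p) (-1) = 1 := by
    rw [quadraticChar_one_iff_isSquare (by simp), ZMod.exists_sq_eq_neg_one_iff]
    lia
  refine ⟨by simp, fun x hx => ?_, fun x hx => ?_⟩
  · rw [mem_filter_univ] at hx ⊢
    rw [neg_eq_neg_one_mul, map_mul, hneg, hx, one_mul]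
  · have := quadraticChar_dichotomy hx
    simp only [mem_filter_univ, map_mul, htwo]
    lia

section Lift

variable {d L : ℕ}

/-- The embedding `ℤ_L → ℤ_{dL}`, `x ↦ d x`. -/
def mulEmbedding (d L : ℕ) : ZMod L →+ ZMod (d * L) :=
  ZMod.lift L ⟨(AddMonoidHom.mulLeft (d : ZMod (d * L))).comp (Int.castAddHom _), by
    simp [← Nat.cast_mul]⟩

/-- The reduction `ℤ_{dL} → ℤ_d`. -/
def reduction (d L : ℕ) : ZMod (d * L) →+* ZMod d := ZMod.castHom (dvd_mul_right d L) (ZMod d)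

theorem mulEmbedding_intCast (x : ℤ) : mulEmbedding d L x = d * x :=
  ZMod.lift_coe _ _ x

theorem mulEmbedding_ofNat_mul (n : ℕ) [n.AtLeastTwo] (x : ZMod L) :
    mulEmbedding d L (ofNat(n) * x) = ofNat(n) * mulEmbedding d L x := by
  simpa only [nsmul_eq_mul, Nat.cast_ofNat] using map_nsmul (mulEmbedding d L) ofNat(n) x

theorem mulEmbedding_injective (hd : d ≠ 0) : Function.Injective (mulEmbedding d L) := by
  refine (ZMod.lift_injective L).mpr fun x hx => ?_
  have hx' : ((d * x : ℤ) : ZMod (d * L)) = 0 := by simpa using hx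
  rw [ZMod.intCast_zmod_eq_zero_iff_dvd] at hx' ⊢
  push_cast at hx'
  exact Int.dvd_of_mul_dvd_mul_left (by exact_mod_cast hd) hx'

theorem reduction_eq_zero_iff {x : ZMod (d * L)} :
    reduction d L x = 0 ↔ ∃ y, mulEmbedding d L y = x := by
  constructor
  · intro hx
    obtain ⟨x, rfl⟩ := ZMod.intCast_surjective x
    rw [map_intCast, ZMod.intCast_zmod_eq_zero_iff_dvd] at hx
    obtain ⟨y, rfl⟩ := hx
    exact ⟨y, by simp [mulEmbedding_intCast]⟩
  · rintro ⟨y, rfl⟩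
    obtain ⟨y, rfl⟩ := ZMod.intCast_surjective y
    simp [mulEmbedding_intCast]

variable [NeZero (d * L)]

/-- The generator set of `ℤ_{dL}` consisting of the residues that reduce into `B ⊆ ℤ_d` and of the
copy `d A` of `A ⊆ ℤ_L`. -/
def liftGenerators (B : Finset (ZMod d)) (A : Finset (ZMod L)) : Finset (ZMod (d * L)) :=
  ({x | reduction d L x ∈ B} : Finset (ZMod (d * L))) ∪ A.image (mulEmbedding d L)

theorem mem_liftGenerators {B : Finset (ZMod d)} {A : Finset (ZMod L)} {x : ZMod (d * L)} :
    x ∈ liftGenerators B A ↔ reduction d L x ∈ B ∨ ∃ y ∈ A, mulEmbedding d L y = x := by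
  simp [liftGenerators]

theorem mulEmbedding_mem_liftGenerators_iff {B : Finset (ZMod d)} (hB : 0 ∉ B)
    {A : Finset (ZMod L)} {y : ZMod L} : mulEmbedding d L y ∈ liftGenerators B A ↔ y ∈ A := by
  have hinj := mulEmbedding_injective (L := L) (left_ne_zero_of_mul (NeZero.ne (d * L)))
  simp [mem_liftGenerators, reduction_eq_zero_iff.mpr ⟨y, rfl⟩, hB, hinj.eq_iff]

theorem card_reduction_eq_zero : #{x | reduction d L x = 0} = L := by
  have : NeZero L := ⟨right_ne_zero_of_mul (NeZero.ne (d * L))⟩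
  have himage : ({x | reduction d L x = 0} : Finset _) = univ.image (mulEmbedding d L) := by
    ext x
    simp [reduction_eq_zero_iff]
  rw [himage, card_image_of_injective _
    (mulEmbedding_injective (left_ne_zero_of_mul (NeZero.ne (d * L)))), card_univ, ZMod.card]

theorem IsDoublingColorClass.two_mul_card_reduction_mem (hdL : Odd (d * L)) {B : Finset (ZMod d)}
    (hB : IsDoublingColorClass B) : 2 * #{x | reduction d L x ∈ B} + L = d * L := by
  have hdouble : #{x | ¬ reduction d L x = 0 ∧ reduction d L x ∉ B} =
      #{x | reduction d L x ∈ B} := by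
    refine card_bijective (2 * ·)
      (IsUnit.isUnit_iff_mulLeft_bijective.mp (isUnit_two_of_odd hdL)) fun x => ?_
    simp only [mem_filter_univ, map_mul, map_ofNat]
    by_cases hx : reduction d L x = 0
    · simp [hx, hB.zero_notMem]
    · simp [hx, hB.two_mul_mem_iff]
  have hmem : #{x | ¬ reduction d L x = 0 ∧ reduction d L x ∈ B} =
      #{x | reduction d L x ∈ B} :=
    congrArg card (filter_congr fun x _ =>
      and_iff_right_of_imp fun hx => ne_of_mem_of_not_mem hx hB.zero_notMem)
  have hsplit := card_filter_add_card_filter_not (s := {x | ¬ reduction d L x = 0})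
    (fun x => reduction d L x ∈ B)
  have htotal := card_filter_add_card_filter_not (s := univ) (fun x => reduction d L x = 0)
  rw [filter_filter, filter_filter, hmem, hdouble] at hsplit
  rw [card_reduction_eq_zero, ← hsplit, card_univ, ZMod.card] at htotal
  lia

theorem IsGeneratorSet.lift (hd : Odd d) {B : Finset (ZMod d)} (hB : IsDoublingColorClass B)
    {A : Finset (ZMod L)} (hA : IsGeneratorSet A) : IsGeneratorSet (liftGenerators B A) := by
  have hembed := fun y => mulEmbedding_mem_liftGenerators_iff (A := A) (y := y) hB.zero_notMem
  refine ⟨?_, fun x hx => ?_, fun x hx h2x => ?_⟩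
  · rw [← map_zero (mulEmbedding d L), hembed]
    exact hA.zero_notMem
  · obtain hxB | ⟨y, hy, rfl⟩ := mem_liftGenerators.mp hx
    · exact mem_liftGenerators.mpr (.inl (by rw [map_neg]; exact hB.neg_mem _ hxB))
    · rw [← map_neg, hembed]
      exact hA.neg_mem y hy
  · obtain hxB | ⟨y, hy, rfl⟩ := mem_liftGenerators.mp hx
    · have hx0 : reduction d L x ≠ 0 := ne_of_mem_of_not_mem hxB hB.zero_notMem
      obtain h2B | ⟨y, -, hy⟩ := mem_liftGenerators.mp h2x
      · rw [map_mul, map_ofNat] at h2B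
        exact absurd hxB ((hB.two_mul_mem_iff _ hx0).mp h2B)
      · have h2x0 : reduction d L (2 * x) = 0 := reduction_eq_zero_iff.mpr ⟨y, hy⟩
        rw [map_mul, map_ofNat, (isUnit_two_of_odd hd).mul_right_eq_zero] at h2x0
        exact absurd h2x0 hx0
    · have h2y : 2 * y ∈ A := by rwa [← hembed, mulEmbedding_ofNat_mul]
      rw [← mulEmbedding_ofNat_mul, hA.three_mul_eq_zero y hy h2y, map_zero]

theorem IsDoublingColorClass.two_mul_card_liftGenerators (hdL : Odd (d * L))
    {B : Finset (ZMod d)} (hB : IsDoublingColorClass B) (A : Finset (ZMod L)) :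
    2 * #(liftGenerators B A) + L = 2 * #A + d * L := by
  have hdisj : Disjoint ({x | reduction d L x ∈ B} : Finset (ZMod (d * L)))
      (A.image (mulEmbedding d L)) := by
    refine disjoint_right.mpr (forall_mem_image.mpr fun y _ hyB => hB.zero_notMem ?_)
    rwa [mem_filter_univ, reduction_eq_zero_iff.mpr ⟨y, rfl⟩] at hyB
  have hB_card := hB.two_mul_card_reduction_mem hdL
  rw [liftGenerators, card_union_of_disjoint hdisj,
    card_image_of_injective _ (mulEmbedding_injective (Nat.odd_mul.mp hdL).1.pos.ne')]
  lia

end Lift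

theorem IsGeneratorSet.exists_of_forall_prime_mod_eight {L : ℕ} {A : Finset (ZMod L)}
    (hA : IsGeneratorSet A) {m : ℕ} (hmL : Odd (m * L))
    (hp : ∀ p : ℕ, p.Prime → p ∣ m → p % 8 = 5) :
    ∃ A' : Finset (ZMod (m * L)), IsGeneratorSet A' ∧ 2 * #A' + L = 2 * #A + m * L := by
  induction m using induction_on_primes with
  | zero => simp at hmL
  | one =>
    rw [one_mul]
    exact ⟨A, hA, rfl⟩
  | prime_mul p m hp_prime ih =>
    rw [mul_assoc] at hmL ⊢
    obtain ⟨hp_odd, hmL_odd⟩ := Nat.odd_mul.mp hmL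
    obtain ⟨A', hA', hcard⟩ := ih hmL_odd fun q hq hqm => hp q hq (hqm.mul_left p)
    have : Fact p.Prime := ⟨hp_prime⟩
    have : NeZero (p * (m * L)) := ⟨hmL.pos.ne'⟩
    have hB := isDoublingColorClass_quadraticChar (hp p hp_prime (dvd_mul_right p m))
    have hlift_card := hB.two_mul_card_liftGenerators hmL A'
    exact ⟨_, hA'.lift hp_odd hB, by lia⟩

theorem isGeneratorSet_three : IsGeneratorSet ({1, 2} : Finset (ZMod 3)) := by
  constructor <;> decide

theorem isGeneratorSet_nine : IsGeneratorSet ({1, 3, 6, 8} : Finset (ZMod 9)) := by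
  constructor <;> decide

theorem MCAC_div_3 (L : ℕ) (hL : 3 < L) (hodd : Odd L) (h3 : 3 ∣ L)
    (hp : ∀ p : ℕ, p.Prime → p ∣ L → p ≠ 3 → p % 8 = 5) :
    (¬ 9 ∣ L → MCAC L 3 = (L + 1) / 4 ∧ MeCAC L 3 = (L + 1) / 4) ∧
    (9 ∣ L → ¬ 27 ∣ L → MCAC L 3 = (L - 1) / 4 ∧ MeCAC L 3 = (L - 1) / 4) := by
  have hp5 : ∀ m : ℕ, m ∣ L → ¬ 3 ∣ m → ∀ p : ℕ, p.Prime → p ∣ m → p % 8 = 5 :=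
    fun m hmL hm3 p hpp hpm => hp p hpp (hpm.trans hmL) fun h => hm3 (h ▸ hpm)
  constructor
  · intro h9
    obtain ⟨m, rfl⟩ := exists_eq_mul_left_of_dvd h3
    obtain ⟨A, hA, hcard⟩ := isGeneratorSet_three.exists_of_forall_prime_mod_eight hodd
      (hp5 m (dvd_mul_right m 3) (by lia))
    rw [show #({1, 2} : Finset (ZMod 3)) = 2 from rfl] at hcard
    rw [show (m * 3 + 1) / 4 = #A / 2 by lia]
    exact hA.MCAC_eq_and_MeCAC_eq hodd (by lia)
  · intro h9 h27
    obtain ⟨m, rfl⟩ := exists_eq_mul_left_of_dvd h9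
    obtain ⟨A, hA, hcard⟩ := isGeneratorSet_nine.exists_of_forall_prime_mod_eight hodd
      (hp5 m (dvd_mul_right m 9) (by lia))
    rw [show #({1, 3, 6, 8} : Finset (ZMod 9)) = 4 from rfl] at hcard
    rw [show (m * 9 - 1) / 4 = #A / 2 by lia]
    exact hA.MCAC_eq_and_MeCAC_eq hodd (by lia)
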